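/- Let k ∈ ℤ, k ≠ −2. On the slit plane Ω = {r e^{iθ} : r > 0, 0 < θ < 2π} with the branch of logarithm log z = log r + iθ and z^w := exp(w·log z), define the holomorphic functions Z(z) = (2/(k+2))·z^{(k+2)/2} and W(z) = −(2i/(k+2))·z^{(k+2)/2}·(log z − 2/(k+2)). Then Z'(z) = z^{k/2}, W'(z) = −i·z^{k/2}·log z, and the function (d/dz)(W'(z)/Z'(z)) · Z'(z)² equals −i·z^{k−1} on Ω. Consequently the associated holomorphic cubic form Ξ = (1/4)(d²W/dZ²) dZ³ equals −(i/4)·z^{k−1} dz³. -/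

import Mathlib

open Complex Set

/-- The plane slit along the nonnegative real axis `Ω = {r e^{iθ} : r > 0, 0 < θ < 2π}`. -/
def SlitΩ : Set ℂ := {z : ℂ | z.im ≠ 0 ∨ z.re < 0}

/-- The branch of the logarithm with `log z = log r + iθ`, `θ ∈ (0, 2π)`. -/
noncomputable def slitLog (z : ℂ) : ℂ := Complex.log (-z) + Real.pi * Complex.I

/-- The power `z^w := exp(w · log z)` for this branch. -/
noncomputable def slitPow (z w : ℂ) : ℂ := Complex.exp (w * slitLog z)

/-- `Z(z) = (2/(k+2)) z^{(k+2)/2}`. -/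
noncomputable def Zcoord (k : ℤ) (z : ℂ) : ℂ :=
  (2 / ((k : ℂ) + 2)) * slitPow z (((k : ℂ) + 2) / 2)

/-- `W(z) = −(2i/(k+2)) z^{(k+2)/2} (log z − 2/(k+2))`. -/
noncomputable def Wcoord (k : ℤ) (z : ℂ) : ℂ :=
  -(2 * Complex.I / ((k : ℂ) + 2)) * slitPow z (((k : ℂ) + 2) / 2)
    * (slitLog z - 2 / ((k : ℂ) + 2))

theorem slit_ne {z : ℂ} (hz : z ∈ SlitΩ) : z ≠ 0 := by
  rintro rfl
  simp [SlitΩ] at hz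

theorem slitLog_deriv {z : ℂ} (hz : z ∈ SlitΩ) : HasDerivAt slitLog (1 / z) z := by
  have h : -z ∈ Complex.slitPlane := by
    rcases hz with h | h
    · right
      simpa using h
    · left
      simpa using h
  have h1 := ((hasDerivAt_id z).neg.clog h).add_const ((Real.pi : ℂ) * Complex.I)
  refine h1.congr_deriv ?_
  simp [neg_div_neg_eq]

theorem slitLog_exp {z : ℂ} (hz : z ∈ SlitΩ) : Complex.exp (slitLog z) = z := by
  have := slit_ne hz
  rw [slitLog, Complex.exp_add, Complex.exp_log (neg_ne_zero.mpr this), Complex.exp_pi_mul_I]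
  ring

theorem slitPow_deriv {z : ℂ} (hz : z ∈ SlitΩ) (a : ℂ) :
    HasDerivAt (fun w => slitPow w a) (slitPow z a * (a * (1 / z))) z :=
  ((slitLog_deriv hz).const_mul a).cexp

theorem slitPow_succ {z : ℂ} (hz : z ∈ SlitΩ) (k : ℂ) :
    slitPow z ((k + 2) / 2) = slitPow z (k / 2) * z := by
  have h : slitPow z (k / 2) * z = slitPow z (k / 2) * Complex.exp (slitLog z) := by
    rw [slitLog_exp hz]
  rw [h, slitPow, slitPow, ← Complex.exp_add]
  congr 1
  ring

theorem slitPow_sq {z : ℂ} (hz : z ∈ SlitΩ) (k : ℤ) :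
    slitPow z ((k : ℂ) / 2) ^ 2 = z ^ k := by
  have h : z ^ k = Complex.exp (slitLog z) ^ k := by rw [slitLog_exp hz]
  rw [h, ← Complex.exp_int_mul, slitPow, ← Complex.exp_nat_mul]
  congr 1
  push_cast
  ring

theorem stmt9 (k : ℤ) (hk : k ≠ -2) :
    ∀ z ∈ SlitΩ,
      HasDerivAt (Zcoord k) (slitPow z ((k : ℂ) / 2)) z ∧
      HasDerivAt (Wcoord k) (-Complex.I * slitPow z ((k : ℂ) / 2) * slitLog z) z ∧
      ∃ d : ℂ,
        HasDerivAt
          (fun w => (-Complex.I * slitPow w ((k : ℂ) / 2) * slitLog w) / slitPow w ((k : ℂ) / 2))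
          d z ∧
        d * (slitPow z ((k : ℂ) / 2)) ^ 2 = -Complex.I * z ^ (k - 1) := by
  intro z hz
  have hz0 := slit_ne hz
  have hk2 : (k : ℂ) + 2 ≠ 0 := by
    intro h
    apply hk
    have h' : ((k + 2 : ℤ) : ℂ) = 0 := by
      push_cast
      exact h
    have := Int.cast_eq_zero.mp h'
    omega
  refine ⟨?_, ?_, -Complex.I * (1 / z), ?_, ?_⟩
  · refine ((slitPow_deriv hz (((k : ℂ) + 2) / 2)).const_mul (2 / ((k : ℂ) + 2))).congr_deriv ?_
    rw [slitPow_succ hz]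
    field_simp
  · refine (((slitPow_deriv hz (((k : ℂ) + 2) / 2)).const_mul
      (-(2 * Complex.I / ((k : ℂ) + 2)))).mul
      ((slitLog_deriv hz).sub_const (2 / ((k : ℂ) + 2)))).congr_deriv ?_
    rw [slitPow_succ hz]
    field_simp
    ring
  · have h := (slitLog_deriv hz).const_mul (-Complex.I)
    refine h.congr_of_eventuallyEq (Filter.Eventually.of_forall fun w => ?_)
    have : slitPow w ((k : ℂ) / 2) ≠ 0 := Complex.exp_ne_zero _
    field_simp
  · rw [slitPow_sq hz, zpow_sub_one₀ hz0]
    ring
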